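/- Let 0 < r < ∞ and let κ_r be the unique number in (0,∞) with lim_{k→∞} (1/k) log Σ_{σ∈Ω_k} (μ_h(J_σ) ‖φ'_σ‖^r)^{κ_r/(r+κ_r)} = 0, and set L := η^3 ξ^{3h}. Then for any finite maximal antichain Γ: (a) L^{-1} Σ_{σ∈Γ} μ_h(J_σ) (μ_h ∘ φ_σ^{-1}) ≤ μ_h ≤ L Σ_{σ∈Γ} μ_h(J_σ) (μ_h ∘ φ_σ^{-1}) as measures; and (b) (Lξ^r)^{-3κ_r/(r+κ_r)} ≤ Σ_{σ∈Γ} (μ_h(J_σ) ‖φ'_σ‖^r)^{κ_r/(r+κ_r)} ≤ (Lξ^r)^{3κ_r/(r+κ_r)}. -/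

import Mathlib

open MeasureTheory Filter Metric

noncomputable section

/-- A cookie-cutter system on `J = [0,1]`. -/
structure CookieCutter where
  N : ℕ
  hN : 2 ≤ N
  Jsub : Fin N → Set ℝ
  f : ℝ → ℝ
  φ : Fin N → ℝ → ℝ
  c : ℝ
  γ : ℝ
  b : ℝ
  B : ℝ
  hJsub_sub : ∀ j, Jsub j ⊆ Set.Icc 0 1
  hJsub_interval : ∀ j, ∃ u v : ℝ, u ≤ v ∧ Jsub j = Set.Icc u v
  hJsub_disj : ∀ i j, i ≠ j → Disjoint (Jsub i) (Jsub j)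
  hbij : ∀ j, Set.BijOn f (Jsub j) (Set.Icc 0 1)
  hφ_maps : ∀ j, ∀ x ∈ Set.Icc (0:ℝ) 1, φ j x ∈ Jsub j
  hφ_rinv : ∀ j, ∀ x ∈ Set.Icc (0:ℝ) 1, f (φ j x) = x
  hφ_linv : ∀ j, ∀ x ∈ Jsub j, φ j (f x) = x
  hfdiff : ∀ j, ∀ x ∈ Jsub j, DifferentiableAt ℝ f x
  hφdiff : ∀ j, ∀ x ∈ Set.Icc (0:ℝ) 1, DifferentiableAt ℝ (φ j) x
  hc : 0 < c
  hγ : γ ∈ Set.Ioc (0:ℝ) 1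
  hHolder : ∀ j, ∀ x ∈ Jsub j, ∀ y ∈ Jsub j, |deriv f x - deriv f y| ≤ c * |x - y| ^ γ
  hb : IsGLB ((fun x => |deriv f x|) '' ⋃ j, Jsub j) b
  hB : IsLUB ((fun x => |deriv f x|) '' ⋃ j, Jsub j) B
  hb1 : 1 < b

namespace CookieCutter

variable (cc : CookieCutter)

/-- `φ_σ = φ_{σ_1} ∘ ⋯ ∘ φ_{σ_n}` for a word `σ`. -/
def wordMap : List (Fin cc.N) → ℝ → ℝ
  | [] => id
  | j :: rest => cc.φ j ∘ wordMap rest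

/-- The basic interval `J_σ = φ_σ(J)`. -/
def Jc (σ : List (Fin cc.N)) : Set ℝ := cc.wordMap σ '' Set.Icc 0 1

/-- The diameter `|J_σ|`. -/
def diamJ (σ : List (Fin cc.N)) : ℝ := Metric.diam (cc.Jc σ)

/-- `‖φ'_σ‖ = sup_{x ∈ J} |φ'_σ(x)|`. -/
def φnorm (σ : List (Fin cc.N)) : ℝ :=
  sSup ((fun x => |deriv (cc.wordMap σ) x|) '' Set.Icc 0 1)

/-- The distortion constant `ξ = exp (c / (b^γ − 1))`. -/
def xi : ℝ := Real.exp (cc.c / (cc.b ^ cc.γ - 1))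

/-- The cookie-cutter set `E = ⋂_{n ≥ 1} ⋃_{σ ∈ Ω_n} J_σ`. -/
def E : Set ℝ := ⋂ (n : ℕ) (_ : 1 ≤ n), ⋃ σ : Fin n → Fin cc.N, cc.Jc (List.ofFn σ)

/-- `η = ξ^{9h}`. -/
def eta (h : ℝ) : ℝ := cc.xi ^ ((9:ℝ) * h)

/-- `L = η³ ξ^{3h}`. -/
def Lconst (h : ℝ) : ℝ := (cc.eta h) ^ 3 * cc.xi ^ ((3:ℝ) * h)

/-- A Gibbs-like measure for the cookie-cutter system: a Borel probability measure
supported on `E` with `η⁻¹|J_σ|^h ≤ μ(J_σ) ≤ η|J_σ|^h` for every word `σ`. -/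
def IsGibbsLike (μ : Measure ℝ) (h : ℝ) : Prop :=
  IsProbabilityMeasure μ ∧ μ (cc.Eᶜ) = 0 ∧
    ∀ σ : List (Fin cc.N), σ ≠ [] →
      (cc.eta h)⁻¹ * cc.diamJ σ ^ h ≤ (μ (cc.Jc σ)).toReal ∧
      (μ (cc.Jc σ)).toReal ≤ cc.eta h * cc.diamJ σ ^ h

/-- A finite maximal antichain in `Ω`. -/
def IsFMA (Γ : Finset (List (Fin cc.N))) : Prop :=
  (∀ σ ∈ Γ, σ ≠ []) ∧
  (∀ ω : ℕ → Fin cc.N, ∃ k : ℕ, 1 ≤ k ∧ (List.ofFn fun i : Fin k => ω i) ∈ Γ) ∧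
  ∀ σ ∈ Γ, ∀ τ ∈ Γ, σ <+: τ → σ = τ

end CookieCutter

/-- The `n`-th quantization error of order `r`. -/
def Vnr (μ : Measure ℝ) (n : ℕ) (r : ℝ) : ℝ :=
  sInf ((fun α : Finset ℝ => ∫ x, Metric.infDist x (α : Set ℝ) ^ r ∂μ) ''
    {α : Finset ℝ | α.Nonempty ∧ α.card ≤ n})

/-- The auxiliary quantization error `u_{n,r}` with `U = (0,1)`. -/
def unr (μ : Measure ℝ) (n : ℕ) (r : ℝ) : ℝ :=
  sInf ((fun α : Finset ℝ =>
      ∫ x, Metric.infDist x ((α : Set ℝ) ∪ (Set.Ioo (0:ℝ) 1)ᶜ) ^ r ∂μ) ''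
    {α : Finset ℝ | α.card ≤ n})


section Words

variable {α : Type*} [Fintype α] [DecidableEq α]

/-- The finset of words of length `n` over a finite alphabet. -/
def wordsOfLength (α : Type*) [Fintype α] [DecidableEq α] (n : ℕ) : Finset (List α) :=
  Finset.univ.image fun σ : Fin n → α => List.ofFn σ

lemma mem_wordsOfLength {n : ℕ} {w : List α} : w ∈ wordsOfLength α n ↔ w.length = n := by
  simp only [wordsOfLength, Finset.mem_image, Finset.mem_univ, true_and]
  constructor
  · rintro ⟨σ, rfl⟩
    simp
  · rintro rfl
    exact ⟨w.get, List.ofFn_get w⟩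

lemma sum_wordsOfLength (n : ℕ) (g : List α → ℝ) :
    ∑ w ∈ wordsOfLength α n, g w = ∑ σ : Fin n → α, g (List.ofFn σ) :=
  Finset.sum_image fun _ _ _ _ e => List.ofFn_injective e

/-- Words of length `n` decompose along a cut set `Γ` of words of length at most `n`. -/
lemma sum_wordsOfLength_eq_sum_antichain {Γ : Finset (List α)} {n : ℕ}
    (hlen : ∀ σ ∈ Γ, σ.length ≤ n)
    (hpre : ∀ w : List α, w.length = n → ∃ σ ∈ Γ, σ <+: w)
    (hanti : ∀ σ ∈ Γ, ∀ τ ∈ Γ, σ <+: τ → σ = τ) (g : List α → ℝ) :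
    ∑ w ∈ wordsOfLength α n, g w =
      ∑ σ ∈ Γ, ∑ τ ∈ wordsOfLength α (n - σ.length), g (σ ++ τ) := by
  rw [Finset.sum_sigma']
  symm
  refine Finset.sum_nbij (fun p => p.1 ++ p.2) ?_ ?_ ?_ fun _ _ => rfl
  · rintro ⟨σ, τ⟩ hp
    obtain ⟨h1, h2⟩ := Finset.mem_sigma.1 hp
    have h3 := mem_wordsOfLength.1 h2
    have h4 := hlen σ h1
    refine mem_wordsOfLength.2 ?_
    simp only [List.length_append] at h3 ⊢
    omega
  · rintro ⟨σ, τ⟩ hp ⟨σ', τ'⟩ hp' e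
    have h1 := (Finset.mem_sigma.1 (Finset.mem_coe.1 hp)).1
    have h1' := (Finset.mem_sigma.1 (Finset.mem_coe.1 hp')).1
    have e' : σ ++ τ = σ' ++ τ' := e
    have hσ : σ = σ' := by
      rcases List.prefix_or_prefix_of_prefix (List.prefix_append σ τ)
        (e' ▸ List.prefix_append σ' τ') with h | h
      · exact hanti _ h1 _ h1' h
      · exact (hanti _ h1' _ h1 h).symm
    subst hσ
    rw [List.append_cancel_left e']
  · intro w hw
    have hw := mem_wordsOfLength.1 (Finset.mem_coe.1 hw)
    obtain ⟨σ, hσ, τ, rfl⟩ := hpre w hw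
    refine ⟨⟨σ, τ⟩, ?_, rfl⟩
    refine Finset.mem_coe.2 (Finset.mem_sigma.2 ⟨hσ, mem_wordsOfLength.2 ?_⟩)
    rw [List.length_append] at hw
    change τ.length = n - σ.length
    omega

lemma sum_wordsOfLength_add (m n : ℕ) (g : List α → ℝ) :
    ∑ w ∈ wordsOfLength α (m + n), g w =
      ∑ σ ∈ wordsOfLength α m, ∑ τ ∈ wordsOfLength α n, g (σ ++ τ) := by
  rw [sum_wordsOfLength_eq_sum_antichain (Γ := wordsOfLength α m)]
  · refine Finset.sum_congr rfl fun σ hσ => ?_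
    rw [mem_wordsOfLength.1 hσ, Nat.add_sub_cancel_left]
  · intro σ hσ
    rw [mem_wordsOfLength.1 hσ]
    omega
  · intro w hw
    refine ⟨w.take m, mem_wordsOfLength.2 ?_, List.take_prefix _ _⟩
    rw [List.length_take]
    omega
  · intro σ hσ τ hτ hst
    exact hst.eq_of_length ((mem_wordsOfLength.1 hσ).trans (mem_wordsOfLength.1 hτ).symm)

end Words

section Fekete

variable {S : ℕ → ℝ} {M : ℝ}

/-- Quasi-submultiplicative sequences of zero exponential growth rate are bounded below. -/
lemma one_le_mul_of_quasi_submultiplicative (hM : 0 < M) (hS : ∀ n, 1 ≤ n → 0 < S n)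
    (hsub : ∀ m n, 1 ≤ m → 1 ≤ n → S (m + n) ≤ M * S m * S n)
    (hlim : Tendsto (fun n : ℕ => (1 / (n : ℝ)) * Real.log (S n)) atTop (nhds 0))
    {n : ℕ} (hn : 1 ≤ n) : 1 ≤ M * S n := by
  have hpow : ∀ k : ℕ, M * S ((k + 1) * n) ≤ (M * S n) ^ (k + 1) := by
    intro k
    induction k with
    | zero => simp
    | succ k ih =>
      have h1 := hsub ((k + 1) * n) n (Nat.mul_pos k.succ_pos hn) hn
      have h2 : (k + 1 + 1) * n = (k + 1) * n + n := by ring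
      rw [h2, pow_succ]
      calc M * S ((k + 1) * n + n) ≤ M * (M * S ((k + 1) * n) * S n) :=
            mul_le_mul_of_nonneg_left h1 hM.le
        _ = (M * S ((k + 1) * n)) * (M * S n) := by ring
        _ ≤ _ := mul_le_mul_of_nonneg_right ih (mul_pos hM (hS n hn)).le
  have hn0 : (0 : ℝ) < n := by exact_mod_cast hn
  have htop : Tendsto (fun k : ℕ => (k + 1) * n) atTop atTop :=
    tendsto_atTop_mono (fun k => k.le_succ.trans (Nat.le_mul_of_pos_right _ hn)) tendsto_id
  have hl1 := hlim.comp htop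
  have hl2 : Tendsto (fun k : ℕ => Real.log (M * S n) / n
      - (1 / (((k + 1) * n : ℕ) : ℝ)) * Real.log M) atTop
      (nhds (Real.log (M * S n) / n - 0 * Real.log M)) :=
    tendsto_const_nhds.sub ((tendsto_one_div_atTop_nhds_zero_nat.comp htop).mul_const _)
  have hle := le_of_tendsto_of_tendsto' hl1 hl2 fun k => by
    have hpos := hS ((k + 1) * n) (Nat.mul_pos k.succ_pos hn)
    have h1 := Real.log_le_log (mul_pos hM hpos) (hpow k)
    rw [Real.log_pow, Real.log_mul hM.ne' hpos.ne'] at h1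
    have hk : (0 : ℝ) < (k : ℝ) + 1 := by positivity
    simp only [Function.comp]
    push_cast at h1 ⊢
    have h2 : 1 / (((k : ℝ) + 1) * n) * (Real.log M + Real.log (S ((k + 1) * n)))
        ≤ 1 / (((k : ℝ) + 1) * n) * (((k : ℝ) + 1) * Real.log (M * S n)) :=
      mul_le_mul_of_nonneg_left h1 (by positivity)
    have h3 : 1 / (((k : ℝ) + 1) * n) * (((k : ℝ) + 1) * Real.log (M * S n))
        = Real.log (M * S n) / n := by
      field_simp
    linarith
  rw [zero_mul, sub_zero] at hle
  have h0 : 0 ≤ Real.log (M * S n) := by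
    have := mul_nonneg hle hn0.le
    rwa [div_mul_cancel₀ _ hn0.ne'] at this
  exact (Real.log_nonneg_iff (mul_pos hM (hS n hn))).1 h0

/-- Quasi-supermultiplicative sequences of zero exponential growth rate are bounded above. -/
lemma le_of_quasi_supermultiplicative (hM : 0 < M) (hS : ∀ n, 1 ≤ n → 0 < S n)
    (hsup : ∀ m n, 1 ≤ m → 1 ≤ n → S m * S n ≤ M * S (m + n))
    (hlim : Tendsto (fun n : ℕ => (1 / (n : ℝ)) * Real.log (S n)) atTop (nhds 0))
    {n : ℕ} (hn : 1 ≤ n) : S n ≤ M := by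
  have h := one_le_mul_of_quasi_submultiplicative (S := fun n => (S n)⁻¹) hM
    (fun n hn => inv_pos.2 (hS n hn)) (fun m n hm hn => by
      have h1 := hS m hm
      have h2 := hS n hn
      have h3 := hS (m + n) (by omega)
      have h4 := hsup m n hm hn
      have h5 : M * (S m)⁻¹ * (S n)⁻¹ = M / (S m * S n) := by
        field_simp
      rw [h5, inv_eq_one_div, div_le_div_iff₀ h3 (mul_pos h1 h2)]
      linarith) (by
      simpa [Real.log_inv] using hlim.neg) hn
  rwa [← div_eq_mul_inv, one_le_div (hS n hn)] at h

/-- A positive quasi-multiplicative weight of zero exponential growth rate has bounded sums over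
finite cut sets. -/
lemma sum_antichain_bounds {α : Type*} [Fintype α] [DecidableEq α] [Nonempty α]
    {a : List α → ℝ} (hM : 0 < M)
    (ha : ∀ σ, σ ≠ [] → 0 < a σ)
    (hsub : ∀ σ τ, σ ≠ [] → τ ≠ [] → a (σ ++ τ) ≤ M * (a σ * a τ))
    (hsup : ∀ σ τ, σ ≠ [] → τ ≠ [] → a σ * a τ ≤ M * a (σ ++ τ))
    (hlim : Tendsto (fun n : ℕ => (1 / (n : ℝ)) *
      Real.log (∑ w ∈ wordsOfLength α n, a w)) atTop (nhds 0))
    {Γ : Finset (List α)} {n : ℕ} (hne : ∀ σ ∈ Γ, σ ≠ []) (hlen : ∀ σ ∈ Γ, σ.length < n)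
    (hpre : ∀ w : List α, w.length = n → ∃ σ ∈ Γ, σ <+: w)
    (hanti : ∀ σ ∈ Γ, ∀ τ ∈ Γ, σ <+: τ → σ = τ) :
    (M ^ 3)⁻¹ ≤ ∑ σ ∈ Γ, a σ ∧ ∑ σ ∈ Γ, a σ ≤ M ^ 3 := by
  set S : ℕ → ℝ := fun n => ∑ w ∈ wordsOfLength α n, a w with hSdef
  have hnil : ∀ {k : ℕ} {w : List α}, 1 ≤ k → w ∈ wordsOfLength α k → w ≠ [] := by
    rintro k w hk hw rfl
    have := mem_wordsOfLength.1 hw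
    simp at this
    omega
  have hS : ∀ k, 1 ≤ k → 0 < S k := fun k hk => by
    refine Finset.sum_pos (fun w hw => ha w (hnil hk hw)) ?_
    exact ⟨List.replicate k (Classical.arbitrary α), mem_wordsOfLength.2 (by simp)⟩
  have hSsub : ∀ k l, 1 ≤ k → 1 ≤ l → S (k + l) ≤ M * S k * S l := fun k l hk hl => by
    simp only [hSdef]
    rw [sum_wordsOfLength_add, mul_assoc, Finset.sum_mul_sum, Finset.mul_sum]
    refine Finset.sum_le_sum fun σ hσ => ?_
    rw [Finset.mul_sum]
    exact Finset.sum_le_sum fun τ hτ => hsub σ τ (hnil hk hσ) (hnil hl hτ)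
  have hSsup : ∀ k l, 1 ≤ k → 1 ≤ l → S k * S l ≤ M * S (k + l) := fun k l hk hl => by
    simp only [hSdef]
    rw [sum_wordsOfLength_add, Finset.sum_mul_sum, Finset.mul_sum]
    refine Finset.sum_le_sum fun σ hσ => ?_
    rw [Finset.mul_sum]
    exact Finset.sum_le_sum fun τ hτ => hsup σ τ (hnil hk hσ) (hnil hl hτ)
  have hlow : ∀ k, 1 ≤ k → 1 ≤ M * S k := fun k hk =>
    one_le_mul_of_quasi_submultiplicative hM hS hSsub hlim hk
  have hupp : ∀ k, 1 ≤ k → S k ≤ M := fun k hk =>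
    le_of_quasi_supermultiplicative hM hS hSsup hlim hk
  obtain ⟨σ₀, hσ₀, -⟩ := hpre (List.replicate n (Classical.arbitrary α)) (by simp)
  have hn : 1 ≤ n := by
    have := hlen σ₀ hσ₀
    omega
  have hdec : S n = ∑ σ ∈ Γ, ∑ τ ∈ wordsOfLength α (n - σ.length), a (σ ++ τ) :=
    sum_wordsOfLength_eq_sum_antichain (fun σ hσ => (hlen σ hσ).le) hpre hanti a
  have hsum1 : S n ≤ M ^ 2 * ∑ σ ∈ Γ, a σ := by
    rw [hdec, Finset.mul_sum]
    refine Finset.sum_le_sum fun σ hσ => ?_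
    have hk : 1 ≤ n - σ.length := by have := hlen σ hσ; omega
    have haσ := ha σ (hne σ hσ)
    calc ∑ τ ∈ wordsOfLength α (n - σ.length), a (σ ++ τ)
        ≤ ∑ τ ∈ wordsOfLength α (n - σ.length), M * a σ * a τ :=
          Finset.sum_le_sum fun τ hτ =>
            (hsub σ τ (hne σ hσ) (hnil hk hτ)).trans_eq (mul_assoc _ _ _).symm
      _ = M * a σ * S (n - σ.length) := (Finset.mul_sum _ _ _).symm
      _ ≤ M * a σ * M := mul_le_mul_of_nonneg_left (hupp _ hk) (mul_pos hM haσ).le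
      _ = M ^ 2 * a σ := by ring
  have hsum2 : ∑ σ ∈ Γ, a σ ≤ M ^ 2 * S n := by
    rw [hdec, Finset.mul_sum]
    refine Finset.sum_le_sum fun σ hσ => ?_
    have hk : 1 ≤ n - σ.length := by have := hlen σ hσ; omega
    have haσ := ha σ (hne σ hσ)
    calc a σ ≤ a σ * (M * S (n - σ.length)) :=
          le_mul_of_one_le_right haσ.le (hlow _ hk)
      _ = M * ∑ τ ∈ wordsOfLength α (n - σ.length), a σ * a τ := by
          rw [← Finset.mul_sum]; ring
      _ ≤ M * ∑ τ ∈ wordsOfLength α (n - σ.length), M * a (σ ++ τ) :=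
          mul_le_mul_of_nonneg_left (Finset.sum_le_sum fun τ hτ =>
            hsup σ τ (hne σ hσ) (hnil hk hτ)) hM.le
      _ = M ^ 2 * ∑ τ ∈ wordsOfLength α (n - σ.length), a (σ ++ τ) := by
          rw [← Finset.mul_sum]; ring
  constructor
  · rw [inv_le_iff_one_le_mul₀ (by positivity)]
    calc 1 ≤ M * S n := hlow n hn
      _ ≤ M * (M ^ 2 * ∑ σ ∈ Γ, a σ) := mul_le_mul_of_nonneg_left hsum1 hM.le
      _ = _ := by ring
  · calc ∑ σ ∈ Γ, a σ ≤ M ^ 2 * S n := hsum2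
      _ ≤ M ^ 2 * M := mul_le_mul_of_nonneg_left (hupp n hn) (by positivity)
      _ = _ := by ring

end Fekete

namespace CookieCutter

variable (cc : CookieCutter)

section Geometry

variable {cc}

lemma φ_mem {j : Fin cc.N} {x : ℝ} (hx : x ∈ Set.Icc (0 : ℝ) 1) :
    cc.φ j x ∈ Set.Icc (0 : ℝ) 1 :=
  cc.hJsub_sub j (cc.hφ_maps j x hx)

lemma wordMap_mem (σ : List (Fin cc.N)) {x : ℝ} (hx : x ∈ Set.Icc (0 : ℝ) 1) :
    cc.wordMap σ x ∈ Set.Icc (0 : ℝ) 1 := by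
  induction σ with
  | nil => exact hx
  | cons j σ ih => exact φ_mem ih

lemma wordMap_append (σ τ : List (Fin cc.N)) :
    cc.wordMap (σ ++ τ) = cc.wordMap σ ∘ cc.wordMap τ := by
  induction σ with
  | nil => rfl
  | cons j σ ih =>
    change cc.φ j ∘ cc.wordMap (σ ++ τ) = cc.φ j ∘ cc.wordMap σ ∘ cc.wordMap τ
    rw [ih]

lemma wordMap_injOn (σ : List (Fin cc.N)) : Set.InjOn (cc.wordMap σ) (Set.Icc 0 1) := by
  induction σ with
  | nil => exact Set.injOn_id _
  | cons j σ ih =>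
    intro x hx y hy e
    refine ih hx hy ?_
    have e' : cc.φ j (cc.wordMap σ x) = cc.φ j (cc.wordMap σ y) := e
    rw [← cc.hφ_rinv j _ (wordMap_mem σ hx), e', cc.hφ_rinv j _ (wordMap_mem σ hy)]

lemma Jc_subset (σ : List (Fin cc.N)) : cc.Jc σ ⊆ Set.Icc 0 1 := by
  rintro _ ⟨x, hx, rfl⟩
  exact wordMap_mem σ hx

lemma Jc_append_subset (σ τ : List (Fin cc.N)) : cc.Jc (σ ++ τ) ⊆ cc.Jc σ := by
  rintro _ ⟨x, hx, rfl⟩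
  rw [wordMap_append]
  exact ⟨_, wordMap_mem τ hx, rfl⟩

lemma prefix_or_prefix_of_mem_Jc {σ τ : List (Fin cc.N)} {x : ℝ} (hσ : x ∈ cc.Jc σ)
    (hτ : x ∈ cc.Jc τ) : σ <+: τ ∨ τ <+: σ := by
  induction σ generalizing τ x with
  | nil => exact Or.inl (List.nil_prefix)
  | cons i σ ih =>
    cases τ with
    | nil => exact Or.inr (List.nil_prefix)
    | cons j τ =>
      obtain ⟨y, hy, rfl⟩ := hσ
      obtain ⟨z, hz, e⟩ := hτ
      have e' : cc.φ j (cc.wordMap τ z) = cc.φ i (cc.wordMap σ y) := e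
      have hij : i = j := by
        by_contra hne
        refine Set.disjoint_left.1 (cc.hJsub_disj i j hne)
          (cc.hφ_maps i _ (wordMap_mem σ hy)) ?_
        rw [← e']
        exact cc.hφ_maps j _ (wordMap_mem τ hz)
      subst hij
      have e2 : cc.wordMap τ z = cc.wordMap σ y := by
        rw [← cc.hφ_rinv i _ (wordMap_mem τ hz), e', cc.hφ_rinv i _ (wordMap_mem σ hy)]
      rcases ih (x := cc.wordMap σ y) ⟨y, hy, rfl⟩ (τ := τ) ⟨z, hz, e2⟩ with h | h
      · exact Or.inl (List.cons_prefix_cons.2 ⟨rfl, h⟩)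
      · exact Or.inr (List.cons_prefix_cons.2 ⟨rfl, h⟩)

lemma differentiableAt_wordMap (σ : List (Fin cc.N)) {x : ℝ} (hx : x ∈ Set.Icc (0 : ℝ) 1) :
    DifferentiableAt ℝ (cc.wordMap σ) x := by
  induction σ with
  | nil => exact differentiableAt_id
  | cons j σ ih => exact (cc.hφdiff j _ (wordMap_mem σ hx)).comp x ih

lemma deriv_wordMap_append (σ τ : List (Fin cc.N)) {x : ℝ} (hx : x ∈ Set.Icc (0 : ℝ) 1) :
    deriv (cc.wordMap (σ ++ τ)) x =
      deriv (cc.wordMap σ) (cc.wordMap τ x) * deriv (cc.wordMap τ) x := by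
  rw [wordMap_append]
  exact deriv_comp x (differentiableAt_wordMap σ (wordMap_mem τ hx))
    (differentiableAt_wordMap τ hx)

lemma deriv_wordMap_cons (j : Fin cc.N) (σ : List (Fin cc.N)) {x : ℝ}
    (hx : x ∈ Set.Icc (0 : ℝ) 1) :
    deriv (cc.wordMap (j :: σ)) x =
      deriv (cc.φ j) (cc.wordMap σ x) * deriv (cc.wordMap σ) x :=
  deriv_comp x (cc.hφdiff j _ (wordMap_mem σ hx)) (differentiableAt_wordMap σ hx)

lemma deriv_f_mul_deriv_φ (j : Fin cc.N) {x : ℝ} (hx : x ∈ Set.Icc (0 : ℝ) 1) :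
    deriv cc.f (cc.φ j x) * deriv (cc.φ j) x = 1 := by
  have h1 : HasDerivAt (cc.f ∘ cc.φ j) (deriv cc.f (cc.φ j x) * deriv (cc.φ j) x) x :=
    (cc.hfdiff j _ (cc.hφ_maps j x hx)).hasDerivAt.comp x (cc.hφdiff j x hx).hasDerivAt
  have h2 : HasDerivWithinAt (cc.f ∘ cc.φ j) 1 (Set.Icc 0 1) x :=
    (hasDerivWithinAt_id x _).congr (fun y hy => cc.hφ_rinv j y hy) (cc.hφ_rinv j x hx)
  exact (uniqueDiffOn_Icc (zero_lt_one' ℝ) x hx).eq_deriv _ h1.hasDerivWithinAt h2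

lemma b_pos : 0 < cc.b := zero_lt_one.trans cc.hb1

lemma b_le_abs_deriv_f {j : Fin cc.N} {x : ℝ} (hx : x ∈ cc.Jsub j) : cc.b ≤ |deriv cc.f x| :=
  cc.hb.1 ⟨x, Set.mem_iUnion.2 ⟨j, hx⟩, rfl⟩

lemma abs_deriv_φ (j : Fin cc.N) {x : ℝ} (hx : x ∈ Set.Icc (0 : ℝ) 1) :
    |deriv (cc.φ j) x| = |deriv cc.f (cc.φ j x)|⁻¹ := by
  have h := congrArg abs (deriv_f_mul_deriv_φ j hx)
  rw [abs_mul, abs_one] at h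
  exact eq_inv_of_mul_eq_one_right h

lemma abs_deriv_φ_le (j : Fin cc.N) {x : ℝ} (hx : x ∈ Set.Icc (0 : ℝ) 1) :
    |deriv (cc.φ j) x| ≤ cc.b⁻¹ := by
  rw [abs_deriv_φ j hx]
  exact inv_anti₀ b_pos (b_le_abs_deriv_f (cc.hφ_maps j x hx))

lemma abs_deriv_wordMap_le (σ : List (Fin cc.N)) {x : ℝ} (hx : x ∈ Set.Icc (0 : ℝ) 1) :
    |deriv (cc.wordMap σ) x| ≤ cc.b⁻¹ ^ σ.length := by
  induction σ with
  | nil => simp [wordMap]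
  | cons j σ ih =>
    rw [deriv_wordMap_cons j σ hx, abs_mul, List.length_cons, pow_succ']
    exact mul_le_mul (abs_deriv_φ_le j (wordMap_mem σ hx)) ih (abs_nonneg _)
      (inv_pos.2 b_pos).le

lemma abs_deriv_wordMap_pos (σ : List (Fin cc.N)) {x : ℝ} (hx : x ∈ Set.Icc (0 : ℝ) 1) :
    0 < |deriv (cc.wordMap σ) x| := by
  induction σ with
  | nil => simp [wordMap]
  | cons j σ ih =>
    rw [deriv_wordMap_cons j σ hx, abs_mul]
    refine mul_pos (abs_pos.2 ?_) ih
    exact right_ne_zero_of_mul (deriv_f_mul_deriv_φ j (wordMap_mem σ hx) ▸ one_ne_zero)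

lemma abs_wordMap_sub_le_of_deriv_le (σ : List (Fin cc.N)) {C : ℝ}
    (hC : ∀ x ∈ Set.Icc (0 : ℝ) 1, |deriv (cc.wordMap σ) x| ≤ C) {x y : ℝ}
    (hx : x ∈ Set.Icc (0 : ℝ) 1) (hy : y ∈ Set.Icc (0 : ℝ) 1) :
    |cc.wordMap σ x - cc.wordMap σ y| ≤ C := by
  have h := (convex_Icc (0 : ℝ) 1).norm_image_sub_le_of_norm_deriv_le
    (fun x hx => differentiableAt_wordMap σ hx) (fun x hx => hC x hx) hy hx
  rw [Real.norm_eq_abs, Real.norm_eq_abs] at h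
  refine h.trans (mul_le_of_le_one_right ((abs_nonneg _).trans (hC x hx)) ?_)
  rw [abs_le]
  constructor <;> linarith [hx.1, hx.2, hy.1, hy.2]

lemma abs_wordMap_sub_le (σ : List (Fin cc.N)) {x y : ℝ}
    (hx : x ∈ Set.Icc (0 : ℝ) 1) (hy : y ∈ Set.Icc (0 : ℝ) 1) :
    |cc.wordMap σ x - cc.wordMap σ y| ≤ cc.b⁻¹ ^ σ.length :=
  abs_wordMap_sub_le_of_deriv_le σ (fun _ h => abs_deriv_wordMap_le σ h) hx hy

lemma one_lt_b_rpow : 1 < cc.b ^ cc.γ := Real.one_lt_rpow cc.hb1 cc.hγ.1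

/-- Bounded distortion, with a constant tracking the length of the word. -/
lemma abs_deriv_wordMap_le_exp_mul (σ : List (Fin cc.N)) {x y : ℝ}
    (hx : x ∈ Set.Icc (0 : ℝ) 1) (hy : y ∈ Set.Icc (0 : ℝ) 1) :
    |deriv (cc.wordMap σ) x| ≤
      Real.exp (cc.c / (cc.b ^ cc.γ - 1) * (1 - (cc.b ^ cc.γ)⁻¹ ^ σ.length)) *
        |deriv (cc.wordMap σ) y| := by
  induction σ with
  | nil => simp [wordMap]
  | cons j σ ih =>
    have hq := one_lt_b_rpow (cc := cc)
    have hxσ := wordMap_mem σ hx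
    have hyσ := wordMap_mem σ hy
    have hstep : |deriv (cc.φ j) (cc.wordMap σ x)| ≤
        Real.exp (cc.c * (cc.b ^ cc.γ)⁻¹ ^ (σ.length + 1)) *
          |deriv (cc.φ j) (cc.wordMap σ y)| := by
      rw [abs_deriv_φ j hxσ, abs_deriv_φ j hyσ]
      have hu := cc.hφ_maps j _ hxσ
      have hv := cc.hφ_maps j _ hyσ
      set u := cc.φ j (cc.wordMap σ x) with hudef
      set v := cc.φ j (cc.wordMap σ y) with hvdef
      have hbu := b_le_abs_deriv_f hu
      have hbv := b_le_abs_deriv_f hv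
      have hb1 := cc.hb1
      have hd : |u - v| ≤ cc.b⁻¹ ^ (σ.length + 1) := abs_wordMap_sub_le (j :: σ) hx hy
      have hH : |deriv cc.f u - deriv cc.f v| ≤ cc.c * (cc.b ^ cc.γ)⁻¹ ^ (σ.length + 1) := by
        refine (cc.hHolder j u hu v hv).trans (mul_le_mul_of_nonneg_left ?_ cc.hc.le)
        refine (Real.rpow_le_rpow (abs_nonneg _) hd cc.hγ.1.le).trans_eq ?_
        have hb' : (0 : ℝ) ≤ cc.b⁻¹ := (inv_pos.2 b_pos).le
        rw [← Real.rpow_natCast, ← Real.rpow_mul hb', mul_comm, Real.rpow_mul hb',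
          Real.rpow_natCast, Real.inv_rpow b_pos.le]
      set t := cc.c * (cc.b ^ cc.γ)⁻¹ ^ (σ.length + 1) with ht
      have hsub : |deriv cc.f v| - |deriv cc.f u| ≤ t := by
        refine (abs_sub_abs_le_abs_sub _ _).trans ?_
        rwa [abs_sub_comm]
      have ht0 : 0 ≤ t := (abs_nonneg _).trans hH
      have hu0 : 0 < |deriv cc.f u| := b_pos.trans_le hbu
      have hv0 : 0 < |deriv cc.f v| := b_pos.trans_le hbv
      rw [← div_eq_mul_inv, inv_eq_one_div, div_le_div_iff₀ hu0 hv0, one_mul]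
      have he := Real.add_one_le_exp t
      have : (t + 1) * |deriv cc.f u| ≤ Real.exp t * |deriv cc.f u| :=
        mul_le_mul_of_nonneg_right he hu0.le
      nlinarith
    rw [deriv_wordMap_cons j σ hx, deriv_wordMap_cons j σ hy, abs_mul, abs_mul,
      List.length_cons]
    have hexp : cc.c / (cc.b ^ cc.γ - 1) * (1 - (cc.b ^ cc.γ)⁻¹ ^ (σ.length + 1)) =
        cc.c * (cc.b ^ cc.γ)⁻¹ ^ (σ.length + 1) +
          cc.c / (cc.b ^ cc.γ - 1) * (1 - (cc.b ^ cc.γ)⁻¹ ^ σ.length) := by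
      have h1 : cc.b ^ cc.γ - 1 ≠ 0 := by linarith
      have h2 : cc.b ^ cc.γ ≠ 0 := by linarith
      rw [pow_succ]
      generalize (cc.b ^ cc.γ)⁻¹ ^ σ.length = p
      field_simp
      ring
    rw [hexp, Real.exp_add]
    refine (mul_le_mul hstep ih (abs_nonneg _) (by positivity)).trans_eq ?_
    ring

lemma xi_pos : 0 < cc.xi := Real.exp_pos _

lemma one_le_xi : 1 ≤ cc.xi :=
  Real.one_le_exp (div_nonneg cc.hc.le (sub_nonneg.2 one_lt_b_rpow.le))

/-- Bounded distortion. -/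
lemma abs_deriv_wordMap_le_xi_mul (σ : List (Fin cc.N)) {x y : ℝ}
    (hx : x ∈ Set.Icc (0 : ℝ) 1) (hy : y ∈ Set.Icc (0 : ℝ) 1) :
    |deriv (cc.wordMap σ) x| ≤ cc.xi * |deriv (cc.wordMap σ) y| := by
  refine (abs_deriv_wordMap_le_exp_mul σ hx hy).trans
    (mul_le_mul_of_nonneg_right (Real.exp_le_exp.2 ?_) (abs_nonneg _))
  have hq := one_lt_b_rpow (cc := cc)
  refine mul_le_of_le_one_right (div_nonneg cc.hc.le (sub_nonneg.2 hq.le)) ?_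
  have : 0 ≤ (cc.b ^ cc.γ)⁻¹ ^ σ.length := by positivity
  linarith

lemma abs_deriv_wordMap_le_φnorm (σ : List (Fin cc.N)) {x : ℝ} (hx : x ∈ Set.Icc (0 : ℝ) 1) :
    |deriv (cc.wordMap σ) x| ≤ cc.φnorm σ := by
  refine le_csSup ⟨cc.b⁻¹ ^ σ.length, ?_⟩ ⟨x, hx, rfl⟩
  rintro _ ⟨y, hy, rfl⟩
  exact abs_deriv_wordMap_le σ hy

lemma φnorm_le {σ : List (Fin cc.N)} {C : ℝ}
    (hC : ∀ x ∈ Set.Icc (0 : ℝ) 1, |deriv (cc.wordMap σ) x| ≤ C) : cc.φnorm σ ≤ C := by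
  refine csSup_le ⟨_, 0, by simp, rfl⟩ ?_
  rintro _ ⟨y, hy, rfl⟩
  exact hC y hy

lemma φnorm_le_xi_mul (σ : List (Fin cc.N)) {x : ℝ} (hx : x ∈ Set.Icc (0 : ℝ) 1) :
    cc.φnorm σ ≤ cc.xi * |deriv (cc.wordMap σ) x| :=
  φnorm_le fun _ hy => abs_deriv_wordMap_le_xi_mul σ hy hx

lemma φnorm_pos (σ : List (Fin cc.N)) : 0 < cc.φnorm σ :=
  (abs_deriv_wordMap_pos σ (x := 0) (by simp)).trans_le
    (abs_deriv_wordMap_le_φnorm σ (by simp))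

lemma φnorm_append_le (σ τ : List (Fin cc.N)) :
    cc.φnorm (σ ++ τ) ≤ cc.φnorm σ * cc.φnorm τ := by
  refine φnorm_le fun x hx => ?_
  rw [deriv_wordMap_append σ τ hx, abs_mul]
  exact mul_le_mul (abs_deriv_wordMap_le_φnorm σ (wordMap_mem τ hx))
    (abs_deriv_wordMap_le_φnorm τ hx) (abs_nonneg _) (φnorm_pos σ).le

lemma φnorm_mul_le (σ τ : List (Fin cc.N)) :
    cc.φnorm σ * cc.φnorm τ ≤ cc.xi * cc.φnorm (σ ++ τ) := by
  rw [mul_comm, ← le_div_iff₀ (φnorm_pos σ)]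
  refine φnorm_le fun x hx => ?_
  rw [le_div_iff₀ (φnorm_pos σ)]
  calc |deriv (cc.wordMap τ) x| * cc.φnorm σ
      ≤ |deriv (cc.wordMap τ) x| * (cc.xi * |deriv (cc.wordMap σ) (cc.wordMap τ x)|) :=
        mul_le_mul_of_nonneg_left (φnorm_le_xi_mul σ (wordMap_mem τ hx)) (abs_nonneg _)
    _ = cc.xi * |deriv (cc.wordMap (σ ++ τ)) x| := by
        rw [deriv_wordMap_append σ τ hx, abs_mul]
        ring
    _ ≤ _ := mul_le_mul_of_nonneg_left (abs_deriv_wordMap_le_φnorm _ hx) xi_pos.le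

lemma diamJ_le_φnorm (σ : List (Fin cc.N)) : cc.diamJ σ ≤ cc.φnorm σ := by
  refine Metric.diam_le_of_forall_dist_le (φnorm_pos σ).le ?_
  rintro _ ⟨x, hx, rfl⟩ _ ⟨y, hy, rfl⟩
  rw [Real.dist_eq]
  exact abs_wordMap_sub_le_of_deriv_le σ (fun _ h => abs_deriv_wordMap_le_φnorm σ h) hx hy

lemma φnorm_le_diamJ (σ : List (Fin cc.N)) : cc.φnorm σ ≤ cc.xi * cc.diamJ σ := by
  obtain ⟨z, hz, e⟩ := exists_deriv_eq_slope (cc.wordMap σ) (zero_lt_one' ℝ)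
    (fun x hx => (differentiableAt_wordMap σ hx).continuousAt.continuousWithinAt)
    (fun x hx => (differentiableAt_wordMap σ
      (Set.Ioo_subset_Icc_self hx)).differentiableWithinAt)
  refine (φnorm_le_xi_mul σ (Set.Ioo_subset_Icc_self hz)).trans
    (mul_le_mul_of_nonneg_left ?_ xi_pos.le)
  rw [e, sub_zero, div_one, ← Real.dist_eq]
  exact Metric.dist_le_diam_of_mem (isBounded_Icc (0 : ℝ) 1 |>.subset (Jc_subset σ))
    ⟨1, by simp, rfl⟩ ⟨0, by simp, rfl⟩

lemma diamJ_pos (σ : List (Fin cc.N)) : 0 < cc.diamJ σ :=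
  pos_of_mul_pos_right ((φnorm_pos σ).trans_le (φnorm_le_diamJ σ)) xi_pos.le

lemma diamJ_append_le (σ τ : List (Fin cc.N)) :
    cc.diamJ (σ ++ τ) ≤ cc.xi ^ 2 * (cc.diamJ σ * cc.diamJ τ) :=
  calc cc.diamJ (σ ++ τ) ≤ cc.φnorm σ * cc.φnorm τ :=
        (diamJ_le_φnorm _).trans (φnorm_append_le σ τ)
    _ ≤ (cc.xi * cc.diamJ σ) * (cc.xi * cc.diamJ τ) :=
        mul_le_mul (φnorm_le_diamJ σ) (φnorm_le_diamJ τ) (φnorm_pos τ).le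
          (mul_pos xi_pos (diamJ_pos σ)).le
    _ = _ := by ring

lemma diamJ_mul_le (σ τ : List (Fin cc.N)) :
    cc.diamJ σ * cc.diamJ τ ≤ cc.xi ^ 2 * cc.diamJ (σ ++ τ) :=
  calc cc.diamJ σ * cc.diamJ τ ≤ cc.φnorm σ * cc.φnorm τ :=
        mul_le_mul (diamJ_le_φnorm σ) (diamJ_le_φnorm τ) (diamJ_pos τ).le (φnorm_pos σ).le
    _ ≤ cc.xi * (cc.xi * cc.diamJ (σ ++ τ)) :=
        (φnorm_mul_le σ τ).trans (mul_le_mul_of_nonneg_left (φnorm_le_diamJ _) xi_pos.le)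
    _ = _ := by ring

lemma continuousOn_wordMap (σ : List (Fin cc.N)) :
    ContinuousOn (cc.wordMap σ) (Set.Icc 0 1) := fun _ hx =>
  (differentiableAt_wordMap σ hx).continuousAt.continuousWithinAt

lemma measurableSet_Jc (σ : List (Fin cc.N)) : MeasurableSet (cc.Jc σ) :=
  (isCompact_Icc.image_of_continuousOn (continuousOn_wordMap σ)).measurableSet

lemma preimage_Jc_append (σ τ : List (Fin cc.N)) :
    cc.wordMap σ ⁻¹' cc.Jc (σ ++ τ) ∩ Set.Icc 0 1 = cc.Jc τ := by
  ext x
  constructor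
  · rintro ⟨⟨y, hy, e⟩, hx⟩
    rw [wordMap_append] at e
    exact ⟨y, hy, wordMap_injOn σ (wordMap_mem τ hy) hx e⟩
  · rintro ⟨y, hy, rfl⟩
    refine ⟨⟨y, hy, ?_⟩, wordMap_mem τ hy⟩
    rw [wordMap_append]
    rfl

end Geometry

section Measure

variable {cc}

/-- Two finite measures carried by the basic intervals of every large level are comparable as soon
as they are comparable on these intervals. -/
lemma measure_le_of_forall_Jc_le {μ ν : Measure ℝ} [IsFiniteMeasure μ] [IsFiniteMeasure ν]
    {C : ENNReal} (hC : C ≠ ⊤) {n₀ : ℕ}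
    (hμ : ∀ n, n₀ ≤ n → μ (⋃ w ∈ wordsOfLength (Fin cc.N) n, cc.Jc w)ᶜ = 0)
    (hle : ∀ w : List (Fin cc.N), n₀ ≤ w.length → μ (cc.Jc w) ≤ C * ν (cc.Jc w))
    {A : Set ℝ} (hA : MeasurableSet A) : μ A ≤ C * ν A := by
  classical
  have hclosed : ∀ K : Set ℝ, IsClosed K → μ K ≤ C * ν K := by
    intro K hK
    have hstep : ∀ n, n₀ ≤ n → μ K ≤ C * ν (Metric.cthickening (cc.b⁻¹ ^ n) K) := by
      intro n hn
      set T := (wordsOfLength (Fin cc.N) n).filter fun w => (cc.Jc w ∩ K).Nonempty with hT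
      have hlen : ∀ w ∈ T, w.length = n := fun w hw =>
        mem_wordsOfLength.1 (Finset.mem_filter.1 hw).1
      have hsub : K ⊆ (⋃ w ∈ T, cc.Jc w) ∪ (⋃ w ∈ wordsOfLength (Fin cc.N) n, cc.Jc w)ᶜ := by
        intro x hx
        by_cases hxE : x ∈ ⋃ w ∈ wordsOfLength (Fin cc.N) n, cc.Jc w
        · obtain ⟨w, hw, hxw⟩ := Set.mem_iUnion₂.1 hxE
          exact Or.inl (Set.mem_iUnion₂.2 ⟨w, Finset.mem_filter.2 ⟨hw, x, hxw, hx⟩, hxw⟩)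
        · exact Or.inr hxE
      have hthick : (⋃ w ∈ T, cc.Jc w) ⊆ Metric.cthickening (cc.b⁻¹ ^ n) K := by
        refine Set.iUnion₂_subset fun w hw x hx => ?_
        obtain ⟨y, hyw, hyK⟩ := (Finset.mem_filter.1 hw).2
        refine Metric.mem_cthickening_of_dist_le x y _ K hyK ?_
        obtain ⟨u, hu, rfl⟩ := hx
        obtain ⟨v, hv, rfl⟩ := hyw
        rw [Real.dist_eq, ← hlen w hw]
        exact abs_wordMap_sub_le w hu hv
      have hdisj : (T : Set (List (Fin cc.N))).PairwiseDisjoint cc.Jc := by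
        intro w hw w' hw' hne
        refine Set.disjoint_left.2 fun x hx hx' => hne ?_
        have h1 := hlen w hw
        have h2 := hlen w' hw'
        rcases prefix_or_prefix_of_mem_Jc hx hx' with h | h
        · exact h.eq_of_length (h1.trans h2.symm)
        · exact (h.eq_of_length (h2.trans h1.symm)).symm
      calc μ K ≤ μ (⋃ w ∈ T, cc.Jc w) +
            μ (⋃ w ∈ wordsOfLength (Fin cc.N) n, cc.Jc w)ᶜ :=
            (measure_mono hsub).trans (measure_union_le _ _)
        _ = μ (⋃ w ∈ T, cc.Jc w) := by rw [hμ n hn, add_zero]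
        _ ≤ ∑ w ∈ T, μ (cc.Jc w) := measure_biUnion_finset_le _ _
        _ ≤ ∑ w ∈ T, C * ν (cc.Jc w) :=
            Finset.sum_le_sum fun w hw => hle w (by rw [hlen w hw]; exact hn)
        _ = C * ν (⋃ w ∈ T, cc.Jc w) := by
            rw [measure_biUnion_finset hdisj fun w _ => measurableSet_Jc w, Finset.mul_sum]
        _ ≤ _ := by gcongr
    have hb0 : Tendsto (fun n : ℕ => cc.b⁻¹ ^ n) atTop (nhds 0) :=
      tendsto_pow_atTop_nhds_zero_of_lt_one (inv_pos.2 b_pos).le (inv_lt_one_of_one_lt₀ cc.hb1)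
    have hlim : Tendsto (fun n : ℕ => C * ν (Metric.cthickening (cc.b⁻¹ ^ n) K)) atTop
        (nhds (C * ν K)) :=
      ENNReal.Tendsto.const_mul ((tendsto_measure_cthickening_of_isClosed
        ⟨1, one_pos, measure_ne_top _ _⟩ hK).comp hb0) (Or.inr hC)
    exact ge_of_tendsto hlim (eventually_atTop.2 ⟨n₀, hstep⟩)
  rw [hA.measure_eq_iSup_isClosed_of_ne_top (measure_ne_top μ A)]
  refine iSup_le fun K => iSup_le fun hKA => iSup_le fun hK => ?_
  exact (hclosed K hK).trans (by gcongr)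

variable {μ : Measure ℝ} {h : ℝ}

lemma eta_pos : 0 < cc.eta h := Real.rpow_pos_of_pos xi_pos _

lemma Lconst_pos : 0 < cc.Lconst h :=
  mul_pos (pow_pos eta_pos 3) (Real.rpow_pos_of_pos xi_pos _)

lemma xi_sq_rpow_le (hh : 0 < h) : (cc.xi ^ 2) ^ h ≤ cc.xi ^ (3 * h) := by
  rw [← Real.rpow_natCast, ← Real.rpow_mul xi_pos.le]
  refine Real.rpow_le_rpow_of_exponent_le one_le_xi ?_
  push_cast
  nlinarith

lemma IsGibbsLike.diamJ_rpow_le (hμ : cc.IsGibbsLike μ h) {σ : List (Fin cc.N)} (hσ : σ ≠ []) :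
    cc.diamJ σ ^ h ≤ cc.eta h * (μ (cc.Jc σ)).toReal :=
  (inv_mul_le_iff₀ eta_pos).1 (hμ.2.2 σ hσ).1

lemma IsGibbsLike.measure_Jc_pos (hμ : cc.IsGibbsLike μ h) {σ : List (Fin cc.N)}
    (hσ : σ ≠ []) : 0 < (μ (cc.Jc σ)).toReal :=
  (mul_pos (inv_pos.2 eta_pos) (Real.rpow_pos_of_pos (diamJ_pos σ) h)).trans_le
    (hμ.2.2 σ hσ).1

lemma IsGibbsLike.measure_Jc_append_le (hμ : cc.IsGibbsLike μ h) (hh : 0 < h)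
    {σ τ : List (Fin cc.N)} (hσ : σ ≠ []) (hτ : τ ≠ []) :
    (μ (cc.Jc (σ ++ τ))).toReal ≤
      cc.Lconst h * ((μ (cc.Jc σ)).toReal * (μ (cc.Jc τ)).toReal) := by
  have hη := eta_pos (cc := cc) (h := h)
  have hdσ := diamJ_pos σ
  have hdτ := diamJ_pos τ
  calc (μ (cc.Jc (σ ++ τ))).toReal ≤ cc.eta h * cc.diamJ (σ ++ τ) ^ h :=
        (hμ.2.2 _ (by simp [hσ])).2
    _ ≤ cc.eta h * (cc.xi ^ 2 * (cc.diamJ σ * cc.diamJ τ)) ^ h := by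
        have := diamJ_append_le σ τ
        have := (diamJ_pos (σ ++ τ)).le
        gcongr
    _ = cc.eta h * ((cc.xi ^ 2) ^ h * (cc.diamJ σ ^ h * cc.diamJ τ ^ h)) := by
        rw [Real.mul_rpow (by positivity) (by positivity), Real.mul_rpow hdσ.le hdτ.le]
    _ ≤ cc.eta h * (cc.xi ^ (3 * h) *
          ((cc.eta h * (μ (cc.Jc σ)).toReal) * (cc.eta h * (μ (cc.Jc τ)).toReal))) := by
        have h1 := xi_sq_rpow_le (cc := cc) hh
        have h2 := hμ.diamJ_rpow_le hσ
        have h3 := hμ.diamJ_rpow_le hτ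
        have := Real.rpow_nonneg (xi_pos (cc := cc)).le (3 * h)
        gcongr
    _ = _ := by
        rw [Lconst]
        ring

lemma IsGibbsLike.measure_Jc_mul_le (hμ : cc.IsGibbsLike μ h) (hh : 0 < h)
    {σ τ : List (Fin cc.N)} (hσ : σ ≠ []) (hτ : τ ≠ []) :
    (μ (cc.Jc σ)).toReal * (μ (cc.Jc τ)).toReal ≤
      cc.Lconst h * (μ (cc.Jc (σ ++ τ))).toReal := by
  have hη := eta_pos (cc := cc) (h := h)
  have hdσ := diamJ_pos σ
  have hdτ := diamJ_pos τ
  have hd := diamJ_pos (σ ++ τ)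
  calc (μ (cc.Jc σ)).toReal * (μ (cc.Jc τ)).toReal
      ≤ (cc.eta h * cc.diamJ σ ^ h) * (cc.eta h * cc.diamJ τ ^ h) := by
        have := (hμ.2.2 σ hσ).2
        have := (hμ.2.2 τ hτ).2
        gcongr
    _ = cc.eta h ^ 2 * (cc.diamJ σ * cc.diamJ τ) ^ h := by
        rw [Real.mul_rpow hdσ.le hdτ.le]
        ring
    _ ≤ cc.eta h ^ 2 * (cc.xi ^ 2 * cc.diamJ (σ ++ τ)) ^ h := by
        have := diamJ_mul_le σ τ
        gcongr
    _ = cc.eta h ^ 2 * ((cc.xi ^ 2) ^ h * cc.diamJ (σ ++ τ) ^ h) := by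
        rw [Real.mul_rpow (by positivity) hd.le]
    _ ≤ cc.eta h ^ 2 * (cc.xi ^ (3 * h) * (cc.eta h * (μ (cc.Jc (σ ++ τ))).toReal)) := by
        have h1 := xi_sq_rpow_le (cc := cc) hh
        have h2 := hμ.diamJ_rpow_le (σ := σ ++ τ) (by simp [hσ])
        have := Real.rpow_nonneg (xi_pos (cc := cc)).le (3 * h)
        gcongr
    _ = _ := by
        rw [Lconst]
        ring

lemma IsGibbsLike.measure_compl_iUnion_Jc (hμ : cc.IsGibbsLike μ h) {n : ℕ} (hn : 1 ≤ n) :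
    μ (⋃ w ∈ wordsOfLength (Fin cc.N) n, cc.Jc w)ᶜ = 0 := by
  refine measure_mono_null (Set.compl_subset_compl.2 fun x hx => ?_) hμ.2.1
  obtain ⟨σ, hσ⟩ := Set.mem_iUnion.1 (Set.mem_iInter₂.1 hx n hn)
  exact Set.mem_iUnion₂.2 ⟨_, mem_wordsOfLength.2 (by simp), hσ⟩

lemma IsGibbsLike.measure_compl_Icc (hμ : cc.IsGibbsLike μ h) :
    μ (Set.Icc 0 1)ᶜ = 0 :=
  measure_mono_null (Set.compl_subset_compl.2 (Set.iUnion₂_subset fun w _ => Jc_subset w))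
    (hμ.measure_compl_iUnion_Jc le_rfl)

lemma IsGibbsLike.measure_inter_Icc (hμ : cc.IsGibbsLike μ h) (A : Set ℝ) :
    μ (A ∩ Set.Icc 0 1) = μ A :=
  measure_inter_conull hμ.measure_compl_Icc

lemma IsGibbsLike.aemeasurable_wordMap (hμ : cc.IsGibbsLike μ h) (σ : List (Fin cc.N)) :
    AEMeasurable (cc.wordMap σ) μ := by
  have h1 := (continuousOn_wordMap σ).aemeasurable (μ := μ) measurableSet_Icc
  rwa [Measure.restrict_eq_self_of_ae_mem (s := Set.Icc 0 1)
    (mem_ae_iff.2 hμ.measure_compl_Icc)] at h1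

end Measure

section Antichain

variable {cc} {Γ : Finset (List (Fin cc.N))}

lemma IsFMA.exists_length_lt (hΓ : cc.IsFMA Γ) : ∃ n₀ : ℕ, 1 ≤ n₀ ∧
    (∀ σ ∈ Γ, σ.length < n₀) ∧
    ∀ w : List (Fin cc.N), n₀ ≤ w.length → ∃ σ ∈ Γ, σ <+: w := by
  have hlt : ∀ σ ∈ Γ, σ.length < Γ.sup List.length + 1 := fun σ hσ =>
    Nat.lt_succ_of_le (Finset.le_sup (f := List.length) hσ)
  refine ⟨Γ.sup List.length + 1, by omega, hlt, fun w hw => ?_⟩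
  have hN : 0 < cc.N := by have := cc.hN; omega
  obtain ⟨k, -, hk⟩ := hΓ.2.1 fun i => w.getD i ⟨0, hN⟩
  have hkw : k < w.length := by
    have := hlt _ hk
    rw [List.length_ofFn] at this
    omega
  refine ⟨_, hk, ?_⟩
  have : (List.ofFn fun i : Fin k => w.getD i ⟨0, hN⟩) = w.take k := by
    refine List.ext_getElem (by simp [hkw.le]) fun i h1 h2 => ?_
    have hi : i < w.length := by simp at h1; omega
    simp [hi]
  rw [this]
  exact List.take_prefix _ _

/-- The measure `∑ σ ∈ Γ, μ(J_σ) (μ ∘ φ_σ⁻¹)`. -/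
def antichainMeasure (Γ : Finset (List (Fin cc.N))) (μ : Measure ℝ) : Measure ℝ :=
  ∑ σ ∈ Γ, μ (cc.Jc σ) • μ.map (cc.wordMap σ)

variable {μ : Measure ℝ} {h : ℝ}

lemma IsGibbsLike.antichainMeasure_apply (hμ : cc.IsGibbsLike μ h) {A : Set ℝ}
    (hA : MeasurableSet A) :
    antichainMeasure Γ μ A = ∑ σ ∈ Γ, μ (cc.Jc σ) * μ (cc.wordMap σ ⁻¹' A) := by
  simp only [antichainMeasure, Measure.finsetSum_apply, Measure.smul_apply, smul_eq_mul]
  exact Finset.sum_congr rfl fun σ _ => by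
    rw [Measure.map_apply_of_aemeasurable (hμ.aemeasurable_wordMap σ) hA]

lemma IsGibbsLike.antichainMeasure_Jc_append (hμ : cc.IsGibbsLike μ h)
    (hanti : ∀ σ ∈ Γ, ∀ τ ∈ Γ, σ <+: τ → σ = τ) {σ : List (Fin cc.N)} (hσ : σ ∈ Γ)
    (τ : List (Fin cc.N)) :
    antichainMeasure Γ μ (cc.Jc (σ ++ τ)) = μ (cc.Jc σ) * μ (cc.Jc τ) := by
  rw [hμ.antichainMeasure_apply (measurableSet_Jc _), Finset.sum_eq_single_of_mem σ hσ]
  · rw [← hμ.measure_inter_Icc (cc.wordMap σ ⁻¹' _), preimage_Jc_append]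
  · intro σ' hσ' hne
    suffices cc.wordMap σ' ⁻¹' cc.Jc (σ ++ τ) ∩ Set.Icc 0 1 = ∅ by
      rw [← hμ.measure_inter_Icc (cc.wordMap σ' ⁻¹' _), this, measure_empty, mul_zero]
    refine Set.eq_empty_of_forall_notMem fun x hx => hne ?_
    rcases prefix_or_prefix_of_mem_Jc (σ := σ') ⟨x, hx.2, rfl⟩ (Jc_append_subset σ τ hx.1)
      with h | h
    · exact hanti _ hσ' _ hσ h
    · exact (hanti _ hσ _ hσ' h).symm

lemma IsGibbsLike.antichainMeasure_compl_iUnion_Jc (hμ : cc.IsGibbsLike μ h) {n : ℕ}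
    (hlen : ∀ σ ∈ Γ, σ.length < n) :
    antichainMeasure Γ μ (⋃ w ∈ wordsOfLength (Fin cc.N) n, cc.Jc w)ᶜ = 0 := by
  rw [hμ.antichainMeasure_apply
    (Finset.measurableSet_biUnion _ fun w _ => measurableSet_Jc w).compl]
  refine Finset.sum_eq_zero fun σ hσ => mul_eq_zero_of_right _ ?_
  have hk := hlen σ hσ
  refine measure_mono_null ?_ (hμ.measure_compl_iUnion_Jc (n := n - σ.length) (by omega))
  rw [Set.preimage_compl]
  refine Set.compl_subset_compl.2 fun x hx => ?_
  obtain ⟨w, hw, y, hy, rfl⟩ := Set.mem_iUnion₂.1 hx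
  have hw := mem_wordsOfLength.1 hw
  refine Set.mem_iUnion₂.2 ⟨σ ++ w, mem_wordsOfLength.2 ?_, y, hy, ?_⟩
  · rw [List.length_append]
    omega
  · rw [wordMap_append]
    rfl

lemma IsGibbsLike.isFiniteMeasure_antichainMeasure (hμ : cc.IsGibbsLike μ h) :
    IsFiniteMeasure (antichainMeasure Γ μ) := by
  have := hμ.1
  constructor
  rw [hμ.antichainMeasure_apply MeasurableSet.univ]
  exact ENNReal.sum_lt_top.2 fun σ _ =>
    ENNReal.mul_lt_top (measure_lt_top _ _) (measure_lt_top _ _)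

/-- A Gibbs-like measure is comparable to `∑ σ ∈ Γ, μ(J_σ) (μ ∘ φ_σ⁻¹)`. -/
lemma IsGibbsLike.antichainMeasure_comparable (hμ : cc.IsGibbsLike μ h) (hh : 0 < h)
    (hΓ : cc.IsFMA Γ) {A : Set ℝ} (hA : MeasurableSet A) :
    antichainMeasure Γ μ A ≤ ENNReal.ofReal (cc.Lconst h) * μ A ∧
      μ A ≤ ENNReal.ofReal (cc.Lconst h) * antichainMeasure Γ μ A := by
  have := hμ.1
  have := hμ.isFiniteMeasure_antichainMeasure (Γ := Γ)
  obtain ⟨n₀, hn₀, hlen, hpre⟩ := hΓ.exists_length_lt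
  have hL := Lconst_pos (cc := cc) (h := h)
  have hsplit : ∀ w : List (Fin cc.N), n₀ ≤ w.length →
      ∃ σ ∈ Γ, ∃ τ, σ ≠ [] ∧ τ ≠ [] ∧ σ ++ τ = w := by
    intro w hw
    obtain ⟨σ, hσ, τ, rfl⟩ := hpre w hw
    refine ⟨σ, hσ, τ, hΓ.1 σ hσ, ?_, rfl⟩
    rintro rfl
    have := hlen σ hσ
    simp at hw
    omega
  constructor
  · refine measure_le_of_forall_Jc_le ENNReal.ofReal_ne_top (n₀ := n₀)
      (fun n hn => hμ.antichainMeasure_compl_iUnion_Jc fun σ hσ => (hlen σ hσ).trans_le hn)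
      (fun w hw => ?_) hA
    obtain ⟨σ, hσ, τ, hσ0, hτ0, rfl⟩ := hsplit w hw
    rw [hμ.antichainMeasure_Jc_append hΓ.2.2 hσ, ← ENNReal.toReal_le_toReal
      (ENNReal.mul_ne_top (measure_ne_top _ _) (measure_ne_top _ _))
      (ENNReal.mul_ne_top ENNReal.ofReal_ne_top (measure_ne_top _ _)),
      ENNReal.toReal_mul, ENNReal.toReal_mul, ENNReal.toReal_ofReal hL.le]
    exact hμ.measure_Jc_mul_le hh hσ0 hτ0
  · refine measure_le_of_forall_Jc_le ENNReal.ofReal_ne_top (n₀ := n₀)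
      (fun n hn => hμ.measure_compl_iUnion_Jc (hn₀.trans hn)) (fun w hw => ?_) hA
    obtain ⟨σ, hσ, τ, hσ0, hτ0, rfl⟩ := hsplit w hw
    rw [hμ.antichainMeasure_Jc_append hΓ.2.2 hσ, ← ENNReal.toReal_le_toReal
      (measure_ne_top _ _) (ENNReal.mul_ne_top ENNReal.ofReal_ne_top
        (ENNReal.mul_ne_top (measure_ne_top _ _) (measure_ne_top _ _))),
      ENNReal.toReal_mul, ENNReal.toReal_mul, ENNReal.toReal_ofReal hL.le]
    exact hμ.measure_Jc_append_le hh hσ0 hτ0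

lemma IsGibbsLike.antichainMeasure_toReal (hμ : cc.IsGibbsLike μ h) {A : Set ℝ}
    (hA : MeasurableSet A) :
    (antichainMeasure Γ μ A).toReal =
      ∑ σ ∈ Γ, (μ (cc.Jc σ)).toReal * (μ (cc.wordMap σ ⁻¹' A)).toReal := by
  have := hμ.1
  rw [hμ.antichainMeasure_apply hA, ENNReal.toReal_sum fun σ _ =>
    ENNReal.mul_ne_top (measure_ne_top _ _) (measure_ne_top _ _)]
  simp only [ENNReal.toReal_mul]

variable {r s : ℝ} {σ τ : List (Fin cc.N)}

lemma IsGibbsLike.weight_append_le (hμ : cc.IsGibbsLike μ h) (hh : 0 < h) (hr : 0 < r)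
    (hs : 0 ≤ s) (hσ : σ ≠ []) (hτ : τ ≠ []) :
    ((μ (cc.Jc (σ ++ τ))).toReal * cc.φnorm (σ ++ τ) ^ r) ^ s ≤
      (cc.Lconst h * cc.xi ^ r) ^ s * (((μ (cc.Jc σ)).toReal * cc.φnorm σ ^ r) ^ s *
        ((μ (cc.Jc τ)).toReal * cc.φnorm τ ^ r) ^ s) := by
  have hL := Lconst_pos (cc := cc) (h := h)
  have hξ := xi_pos (cc := cc)
  have h1 := φnorm_pos σ
  have h2 := φnorm_pos τ
  have h3 := φnorm_pos (σ ++ τ)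
  rw [← Real.mul_rpow (by positivity) (by positivity),
    ← Real.mul_rpow (by positivity) (by positivity)]
  refine Real.rpow_le_rpow (by positivity) ?_ hs
  have h4 := hμ.measure_Jc_append_le hh hσ hτ
  calc (μ (cc.Jc (σ ++ τ))).toReal * cc.φnorm (σ ++ τ) ^ r
      ≤ (cc.Lconst h * ((μ (cc.Jc σ)).toReal * (μ (cc.Jc τ)).toReal)) *
          (cc.xi * (cc.φnorm σ * cc.φnorm τ)) ^ r := by
        have h5 : cc.φnorm (σ ++ τ) ≤ cc.xi * (cc.φnorm σ * cc.φnorm τ) :=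
          (φnorm_append_le σ τ).trans (le_mul_of_one_le_left (by positivity) one_le_xi)
        gcongr
    _ = _ := by
        rw [Real.mul_rpow hξ.le (by positivity), Real.mul_rpow h1.le h2.le]
        ring

lemma IsGibbsLike.weight_mul_le (hμ : cc.IsGibbsLike μ h) (hh : 0 < h) (hr : 0 < r)
    (hs : 0 ≤ s) (hσ : σ ≠ []) (hτ : τ ≠ []) :
    ((μ (cc.Jc σ)).toReal * cc.φnorm σ ^ r) ^ s *
        ((μ (cc.Jc τ)).toReal * cc.φnorm τ ^ r) ^ s ≤
      (cc.Lconst h * cc.xi ^ r) ^ s *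
        ((μ (cc.Jc (σ ++ τ))).toReal * cc.φnorm (σ ++ τ) ^ r) ^ s := by
  have hL := Lconst_pos (cc := cc) (h := h)
  have hξ := xi_pos (cc := cc)
  have h1 := φnorm_pos σ
  have h2 := φnorm_pos τ
  have h3 := φnorm_pos (σ ++ τ)
  rw [← Real.mul_rpow (by positivity) (by positivity),
    ← Real.mul_rpow (by positivity) (by positivity)]
  refine Real.rpow_le_rpow (by positivity) ?_ hs
  have h4 := hμ.measure_Jc_mul_le hh hσ hτ
  calc (μ (cc.Jc σ)).toReal * cc.φnorm σ ^ r * ((μ (cc.Jc τ)).toReal * cc.φnorm τ ^ r)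
      = ((μ (cc.Jc σ)).toReal * (μ (cc.Jc τ)).toReal) * (cc.φnorm σ * cc.φnorm τ) ^ r := by
        rw [Real.mul_rpow h1.le h2.le]
        ring
    _ ≤ (cc.Lconst h * (μ (cc.Jc (σ ++ τ))).toReal) * (cc.xi * cc.φnorm (σ ++ τ)) ^ r := by
        have h5 := φnorm_mul_le σ τ
        gcongr
    _ = _ := by
        rw [Real.mul_rpow hξ.le h3.le]
        ring

end Antichain

end CookieCutter

theorem antichain_bounds (cc : CookieCutter) (Q : ℝ → ℝ)
    (hQ : ∀ t : ℝ, Filter.Tendsto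
      (fun k : ℕ => (1 / (k : ℝ)) * Real.log
        (∑ σ : Fin k → Fin cc.N, cc.φnorm (List.ofFn σ) ^ t))
      Filter.atTop (nhds (Q t)))
    (h : ℝ) (hh0 : 0 < h) (hQh : Q h = 0)
    (μ : MeasureTheory.Measure ℝ) (hμ : cc.IsGibbsLike μ h) (r : ℝ) (hr : 0 < r)
    (κ : ℝ) (hκ : 0 < κ)
    (hκlim : Filter.Tendsto
      (fun n : ℕ => (1 / (n : ℝ)) * Real.log
        (∑ σ : Fin n → Fin cc.N,
          ((μ (cc.Jc (List.ofFn σ))).toReal * cc.φnorm (List.ofFn σ) ^ r) ^ (κ / (r + κ))))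
      Filter.atTop (nhds 0))
    (Γ : Finset (List (Fin cc.N))) (hΓ : cc.IsFMA Γ) :
    (∀ A : Set ℝ, MeasurableSet A →
      (cc.Lconst h)⁻¹ *
          ∑ σ ∈ Γ, (μ (cc.Jc σ)).toReal * (μ (cc.wordMap σ ⁻¹' A)).toReal ≤
        (μ A).toReal ∧
      (μ A).toReal ≤
        cc.Lconst h * ∑ σ ∈ Γ, (μ (cc.Jc σ)).toReal * (μ (cc.wordMap σ ⁻¹' A)).toReal) ∧
    ((cc.Lconst h * cc.xi ^ r) ^ (3 * κ / (r + κ)))⁻¹ ≤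
      (∑ σ ∈ Γ, ((μ (cc.Jc σ)).toReal * cc.φnorm σ ^ r) ^ (κ / (r + κ))) ∧
    (∑ σ ∈ Γ, ((μ (cc.Jc σ)).toReal * cc.φnorm σ ^ r) ^ (κ / (r + κ))) ≤
      (cc.Lconst h * cc.xi ^ r) ^ (3 * κ / (r + κ)) := by
  have hprob := hμ.1
  have hL := CookieCutter.Lconst_pos (cc := cc) (h := h)
  constructor
  · intro A hA
    have hfin := hμ.isFiniteMeasure_antichainMeasure (Γ := Γ)
    obtain ⟨h1, h2⟩ := hμ.antichainMeasure_comparable hh0 hΓ hA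
    have h1' := ENNReal.toReal_mono
      (ENNReal.mul_ne_top ENNReal.ofReal_ne_top (measure_ne_top _ _)) h1
    have h2' := ENNReal.toReal_mono
      (ENNReal.mul_ne_top ENNReal.ofReal_ne_top (measure_ne_top _ _)) h2
    rw [ENNReal.toReal_mul, ENNReal.toReal_ofReal hL.le, hμ.antichainMeasure_toReal hA]
      at h1' h2'
    exact ⟨(inv_mul_le_iff₀ hL).2 h1', h2'⟩
  · obtain ⟨n₀, hn₀, hlen, hpre⟩ := hΓ.exists_length_lt
    have hs : 0 ≤ κ / (r + κ) := by positivity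
    have hLξ : 0 < cc.Lconst h * cc.xi ^ r :=
      mul_pos hL (Real.rpow_pos_of_pos CookieCutter.xi_pos r)
    have hpow : (cc.Lconst h * cc.xi ^ r) ^ (3 * κ / (r + κ)) =
        ((cc.Lconst h * cc.xi ^ r) ^ (κ / (r + κ))) ^ 3 := by
      rw [← Real.rpow_natCast, ← Real.rpow_mul hLξ.le]
      congr 1
      push_cast
      ring
    have : Nonempty (Fin cc.N) := ⟨⟨0, by have := cc.hN; omega⟩⟩
    rw [hpow]
    refine sum_antichain_bounds
      (a := fun σ => ((μ (cc.Jc σ)).toReal * cc.φnorm σ ^ r) ^ (κ / (r + κ)))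
      (Real.rpow_pos_of_pos hLξ _)
      (fun σ hσ => Real.rpow_pos_of_pos (mul_pos (hμ.measure_Jc_pos hσ)
        (Real.rpow_pos_of_pos (CookieCutter.φnorm_pos σ) r)) _)
      (fun σ τ hσ hτ => hμ.weight_append_le hh0 hr hs hσ hτ)
      (fun σ τ hσ hτ => hμ.weight_mul_le hh0 hr hs hσ hτ) ?_ hΓ.1 hlen
      (fun w hw => hpre w hw.ge) hΓ.2.2
    simpa only [sum_wordsOfLength] using hκlim
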